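/- arXiv:2507.18698 — 3 statements merged into one kernel-verified Lean document; each statement's English description precedes it below -/
import Mathlib

section
/- Let m ≥ 0, Λ > 0, and let ϑ(θ) = (1 − sin θ)/cos θ for θ ∈ (−π/2, π/2). Let S' ⊆ (0, ∞) × (0, ∞) be a set, and suppose there are functions μ : (0, ∞) → ℝ and λ : (−π/2, π/2) → ℝ such that: (1) for every a > 0, μ(a) > 0, (a, μ(a)) ∈ S', and μ(a) ≤ μ' whenever (a, μ') ∈ S'; (2) μ is continuous, strictly increasing, and its range is exactly (0, Λ); (3) the function a ↦ μ(a)/a is strictly decreasing on (0, ∞); (4) for every θ ∈ (−π/2, π/2), λ(θ) > m, ((λ(θ)+m)·ϑ(θ), λ(θ)² − m²) ∈ S', and λ(θ) ≤ λ' whenever λ' > m satisfies ((λ'+m)·ϑ(θ), λ'² − m²) ∈ S'. Then for every θ ∈ (−π/2, π/2), every λ₀ > m, and the pair (a, μ₀) := ((λ₀+m)·ϑ(θ), λ₀² − m²), one has λ₀ = λ(θ) if and only if μ₀ = μ(a). -/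
open Real Set

/-- The function ϑ(θ) = (1 − sin θ)/cos θ. -/
noncomputable def vartheta (θ : ℝ) : ℝ := (1 - Real.sin θ) / Real.cos θ

/-!
Fix `θ` and put `t = ϑ(θ) > 0`. Dividing `x² - m² = μ((x + m)t)` by `x + m > 0` turns it into the
fixed point equation `x = φ(x)` with `φ(x) = m + μ((x + m)t)/(x + m)`, which is antitone because
`a ↦ μ(a)/a` is. Hence `φ` has at most one fixed point. By minimality of `μ`, every `x > m` whose
pair lies in `S'` satisfies `φ(x) ≤ x`, and then `φ(x) ≤ φ(φ(x))`, so the intermediate value theorem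
on `[φ(x), x]` gives a fixed point not exceeding `x`. The pair of a fixed point lies in `S'` too,
so the least `x` whose pair does is the fixed point.
-/

open Function (IsFixedPt)

section AntitoneFixedPoint

variable {α : Type*}

theorem isFixedPt_unique_of_antitoneOn [LinearOrder α] {f : α → α} {s : Set α}
    (hf : AntitoneOn f s) {x y : α} (hx : x ∈ s) (hy : y ∈ s)
    (hfx : IsFixedPt f x) (hfy : IsFixedPt f y) : x = y := by
  wlog hxy : x ≤ y generalizing x y
  · exact (this hy hx hfy hfx (le_of_not_ge hxy)).symm
  have hyx : f y ≤ f x := hf hx hy hxy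
  rw [hfx.eq, hfy.eq] at hyx
  exact hxy.antisymm hyx

variable [ConditionallyCompleteLinearOrder α] [TopologicalSpace α] [OrderTopology α]
  [DenselyOrdered α] {f : α → α}

theorem exists_isFixedPt_mem_Icc_of_antitoneOn {b : α} (hcont : ContinuousOn f (Icc (f b) b))
    (hanti : AntitoneOn f (Icc (f b) b)) (hb : f b ≤ b) : ∃ c ∈ Icc (f b) b, IsFixedPt f c :=
  exists_mem_Icc_isFixedPt hcont hb (hanti (left_mem_Icc.2 hb) (right_mem_Icc.2 hb) hb) hb

theorem eq_iff_isFixedPt_of_isLeast {s A : Set α} [s.OrdConnected] (hcont : ContinuousOn f s)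
    (hanti : AntitoneOn f s) (hmaps : MapsTo f s s) (hAs : A ⊆ s) (hA : ∀ x ∈ A, f x ≤ x)
    (hfixed : ∀ x ∈ s, IsFixedPt f x → x ∈ A) {l x : α} (hl : IsLeast A l) (hx : x ∈ s) :
    x = l ↔ IsFixedPt f x := by
  have hls : l ∈ s := hAs hl.1
  have hIcc : Icc (f l) l ⊆ s := s.Icc_subset (hmaps hls) hls
  obtain ⟨c, hc, hfc⟩ := exists_isFixedPt_mem_Icc_of_antitoneOn (hcont.mono hIcc)
    (hanti.mono hIcc) (hA l hl.1)
  have hcl : c = l := hc.2.antisymm (hl.2 (hfixed c (hIcc hc) hfc))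
  have hfl : IsFixedPt f l := hcl ▸ hfc
  exact ⟨fun hxl => hxl ▸ hfl, fun hfx => isFixedPt_unique_of_antitoneOn hanti hx hls hfx hfl⟩

end AntitoneFixedPoint

/-- The map `x ↦ m + μ((x + m)t)/(x + m)`, whose fixed points `x > -m` are the solutions of
`x² - m² = μ((x + m)t)`. The value at `x = -m` is junk. -/
noncomputable def diracFixedPointMap (μ : ℝ → ℝ) (m t x : ℝ) : ℝ :=
  m + μ ((x + m) * t) / (x + m)

section DiracFixedPointMap

variable {μ : ℝ → ℝ} {m t x : ℝ}

theorem isFixedPt_diracFixedPointMap_iff (hx : x + m ≠ 0) :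
    IsFixedPt (diracFixedPointMap μ m t) x ↔ x ^ 2 - m ^ 2 = μ ((x + m) * t) := by
  rw [IsFixedPt, diracFixedPointMap, ← eq_sub_iff_add_eq', div_eq_iff hx, eq_comm,
    show (x - m) * (x + m) = x ^ 2 - m ^ 2 by ring]

theorem diracFixedPointMap_le_iff (hx : 0 < x + m) :
    diracFixedPointMap μ m t x ≤ x ↔ μ ((x + m) * t) ≤ x ^ 2 - m ^ 2 := by
  rw [diracFixedPointMap, ← le_sub_iff_add_le', div_le_iff₀ hx,
    show (x - m) * (x + m) = x ^ 2 - m ^ 2 by ring]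

theorem lt_diracFixedPointMap (hμ : 0 < μ ((x + m) * t)) (hx : 0 < x + m) :
    m < diracFixedPointMap μ m t x :=
  lt_add_of_pos_right m (div_pos hμ hx)

theorem mapsTo_add_mul_Ioi_neg (m : ℝ) (ht : 0 < t) :
    MapsTo (fun x => (x + m) * t) (Ioi (-m)) (Ioi 0) :=
  fun _ hx => mul_pos (neg_lt_iff_pos_add.1 hx) ht

theorem continuousOn_diracFixedPointMap (ht : 0 < t) (hμ : ContinuousOn μ (Ioi 0)) :
    ContinuousOn (diracFixedPointMap μ m t) (Ioi (-m)) := by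
  have hnum : ContinuousOn (fun x => μ ((x + m) * t)) (Ioi (-m)) :=
    hμ.comp (by fun_prop) (mapsTo_add_mul_Ioi_neg m ht)
  exact continuousOn_const.add
    (hnum.div (by fun_prop) fun _ hx => (neg_lt_iff_pos_add.1 hx).ne')

theorem antitoneOn_diracFixedPointMap (ht : 0 < t)
    (hμ : AntitoneOn (fun a => μ a / a) (Ioi 0)) :
    AntitoneOn (diracFixedPointMap μ m t) (Ioi (-m)) := by
  have hrescale (x : ℝ) :
      diracFixedPointMap μ m t x = m + μ ((x + m) * t) / ((x + m) * t) * t := by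
    rw [diracFixedPointMap, div_mul_eq_mul_div, mul_div_mul_right _ _ ht.ne']
  intro x hx y hy hxy
  have hquot : μ ((y + m) * t) / ((y + m) * t) ≤ μ ((x + m) * t) / ((x + m) * t) :=
    hμ (mapsTo_add_mul_Ioi_neg m ht hx) (mapsTo_add_mul_Ioi_neg m ht hy)
      (mul_le_mul_of_nonneg_right (add_le_add_left hxy m) ht.le)
  rw [hrescale, hrescale]
  gcongr

end DiracFixedPointMap

theorem vartheta_pos {θ : ℝ} (hθ : θ ∈ Ioo (-(π / 2)) (π / 2)) : 0 < vartheta θ := by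
  have hcos : 0 < cos θ := cos_pos_of_mem_Ioo hθ
  have hsin : sin θ < 1 := by nlinarith [sin_sq_add_cos_sq θ]
  exact div_pos (sub_pos.2 hsin) hcos

theorem stmt_2_general {m t : ℝ} (hm : 0 ≤ m) (ht : 0 < t) {S : Set (ℝ × ℝ)} {μ : ℝ → ℝ}
    (hpos : ∀ a > 0, 0 < μ a) (hleast : ∀ a > 0, IsLeast {ν | (a, ν) ∈ S} (μ a))
    (hcont : ContinuousOn μ (Ioi 0)) (hanti : AntitoneOn (fun a => μ a / a) (Ioi 0))
    {l x : ℝ} (hl : IsLeast {y | m < y ∧ ((y + m) * t, y ^ 2 - m ^ 2) ∈ S} l) (hx : m < x) :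
    x = l ↔ x ^ 2 - m ^ 2 = μ ((x + m) * t) := by
  have hsub : Ioi m ⊆ Ioi (-m) := Ioi_subset_Ioi (neg_le_self hm)
  have hadd {y : ℝ} (hy : m < y) : 0 < y + m := neg_lt_iff_pos_add.1 (hsub hy)
  have harg {y : ℝ} (hy : m < y) : 0 < (y + m) * t := mul_pos (hadd hy) ht
  rw [← isFixedPt_diracFixedPointMap_iff (hadd hx).ne']
  have hmaps : MapsTo (diracFixedPointMap μ m t) (Ioi m) (Ioi m) :=
    fun y hy => lt_diracFixedPointMap (hpos _ (harg hy)) (hadd hy)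
  have hle : ∀ y ∈ {y | m < y ∧ ((y + m) * t, y ^ 2 - m ^ 2) ∈ S},
      diracFixedPointMap μ m t y ≤ y :=
    fun y hy => (diracFixedPointMap_le_iff (hadd hy.1)).2 ((hleast _ (harg hy.1)).2 hy.2)
  have hfixed : ∀ y ∈ Ioi m, IsFixedPt (diracFixedPointMap μ m t) y →
      y ∈ {y | m < y ∧ ((y + m) * t, y ^ 2 - m ^ 2) ∈ S} := by
    intro y hy hfy
    refine ⟨hy, ?_⟩
    rw [(isFixedPt_diracFixedPointMap_iff (hadd hy).ne').1 hfy]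
    exact (hleast _ (harg hy)).1
  exact eq_iff_isFixedPt_of_isLeast ((continuousOn_diracFixedPointMap ht hcont).mono hsub)
    ((antitoneOn_diracFixedPointMap ht hanti).mono hsub) hmaps (fun _ hy => hy.1) hle hfixed hl hx

/-- Abstract form of Proposition 3.1. -/
theorem stmt_2 (m Λ : ℝ) (hm : 0 ≤ m) (hΛ : 0 < Λ)
    (S' : Set (ℝ × ℝ)) (hS' : S' ⊆ Ioi 0 ×ˢ Ioi 0)
    (μ lam : ℝ → ℝ)
    (h1 : ∀ a > 0, μ a > 0 ∧ (a, μ a) ∈ S' ∧ ∀ μ' : ℝ, (a, μ') ∈ S' → μ a ≤ μ')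
    (h2cont : ContinuousOn μ (Ioi 0))
    (h2mono : StrictMonoOn μ (Ioi 0))
    (h2range : μ '' (Ioi 0) = Ioo 0 Λ)
    (h3 : StrictAntiOn (fun a => μ a / a) (Ioi 0))
    (h4 : ∀ θ ∈ Ioo (-(π/2)) (π/2),
      lam θ > m ∧ ((lam θ + m) * vartheta θ, (lam θ)^2 - m^2) ∈ S' ∧
        ∀ lam' : ℝ, lam' > m → ((lam' + m) * vartheta θ, lam'^2 - m^2) ∈ S' → lam θ ≤ lam') :
    ∀ θ ∈ Ioo (-(π/2)) (π/2), ∀ lam₀ > m,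
      lam₀ = lam θ ↔ lam₀^2 - m^2 = μ ((lam₀ + m) * vartheta θ) :=
  fun θ hθ _ hlam₀ => stmt_2_general hm (vartheta_pos hθ) (fun a ha => (h1 a ha).1)
    (fun a ha => ⟨(h1 a ha).2.1, (h1 a ha).2.2⟩) h2cont h3.antitoneOn
    ⟨⟨(h4 θ hθ).1, (h4 θ hθ).2.1⟩, fun y hy => (h4 θ hθ).2.2 y hy.1 hy.2⟩ hlam₀
end

section
/- Let F : ℂ → ℂ be complex-differentiable on an open set containing the closed unit disk and injective on the closed unit disk, set Ω := F(𝔻) where 𝔻 is the open unit disk, and let u : ℂ → ℂ be complex-differentiable on Ω, continuous on F(closed unit disk), and not identically zero on Ω. Then equality holds in the inequality ∫_𝔻 |u(F(z))|² |F'(z)|² dA(z) ≤ (1/2) · √(( ∫_𝔻 |F'(z)|² dA(z) ) / π) · ∫₀^{2π} |u(F(e^{iφ}))|² |F'(e^{iφ})| dφ if and only if u is constant on Ω and Ω is an open disk, i.e., there exist c ∈ ℂ and r > 0 with Ω = {z ∈ ℂ : |z − c| < r}. -/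
open Real Set MeasureTheory

/-!
Write `F' = f ^ 2` and `w = (u ∘ F) f`, with Taylor coefficients `a n`. By Parseval the mean of
`‖w‖ ^ 2` on the unit circle is `M = ∑ ‖a n‖ ^ 2`, and the area integral of `‖w‖ ^ 4` is
`π ∑ ‖∑ i + j = n, a i * a j‖ ^ 2 / (n + 1)`. In `M ^ 2 - π⁻¹ ∫ ‖w‖ ^ 4` the terms of degree `n`
form the sum of squared deviations of the `n + 1` products `a i * a j` from their mean (Carleman's
inequality), so equality means that `a` is geometric, i.e. `w` is a multiple of `1 / (1 - q z)`.

The embedding is Cauchy–Schwarz for `‖F'‖` and `‖w‖ ^ 2` followed by Carleman. Equality in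
the first step makes `‖u ∘ F‖`, hence `u`, constant; equality in the second then reads
`F' = κ / (1 - q z) ^ 2`, which integrates to a Möbius map onto a disc. Conversely, every
conformal map of the unit disc onto a disc has this form, by the Schwarz lemma.
-/

section Univalent

open Filter Metric Topology

variable {f g : ℂ → ℂ} {s : Set ℂ} {z₀ : ℂ}

lemma not_eventually_eq_of_injOn (hs : s ∈ 𝓝 z₀) (hinj : InjOn f s) :
    ¬ ∀ᶠ z in 𝓝 z₀, f z = f z₀ := by
  intro hconst
  have heq : ∀ᶠ z in 𝓝 z₀, z = z₀ := by
    filter_upwards [hconst, hs] with z hz hzs using hinj hzs (mem_of_mem_nhds hs) hz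
  obtain ⟨z, hz, hne⟩ := ((heq.filter_mono nhdsWithin_le_nhds).and
    (self_mem_nhdsWithin : {z₀}ᶜ ∈ 𝓝[≠] z₀)).exists
  exact hne hz

lemma map_nhds_eq_of_injOn (hf : AnalyticAt ℂ f z₀) (hs : s ∈ 𝓝 z₀) (hinj : InjOn f s) :
    map f (𝓝 z₀) = 𝓝 (f z₀) :=
  le_antisymm hf.continuousAt <| hf.eventually_constant_or_nhds_le_map_nhds.resolve_left
    (not_eventually_eq_of_injOn hs hinj)

lemma eventually_deriv_ne_zero_of_injOn (hf : AnalyticAt ℂ f z₀) (hs : s ∈ 𝓝 z₀)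
    (hinj : InjOn f s) : ∀ᶠ z in 𝓝[≠] z₀, deriv f z ≠ 0 := by
  refine hf.deriv.eventually_eq_zero_or_eventually_ne_zero.resolve_left fun hzero ↦ ?_
  have horder := hf.analyticOrderAt_deriv_add_one
  rw [analyticOrderAt_eq_top.mpr hzero, top_add, eq_comm, analyticOrderAt_eq_top] at horder
  exact not_eventually_eq_of_injOn hs hinj (by simpa only [sub_eq_zero] using horder)

lemma continuousAt_of_leftInvOn (hf : AnalyticAt ℂ f z₀) (hs : s ∈ 𝓝 z₀)
    (hg : LeftInvOn g f s) : ContinuousAt g (f z₀) := by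
  have hgf : g ∘ f =ᶠ[𝓝 z₀] id := by filter_upwards [hs] with z hz using hg hz
  rw [ContinuousAt, hg (mem_of_mem_nhds hs), ← map_nhds_eq_of_injOn hf hs hg.injOn,
    tendsto_map'_iff]
  exact tendsto_id.congr' hgf.symm

lemma differentiableAt_of_leftInvOn_of_deriv_ne_zero (hf : AnalyticAt ℂ f z₀) (hs : s ∈ 𝓝 z₀)
    (hg : LeftInvOn g f s) (hderiv : deriv f z₀ ≠ 0) : DifferentiableAt ℂ g (f z₀) := by
  have hz₀ : g (f z₀) = z₀ := hg (mem_of_mem_nhds hs)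
  have hfg : ∀ᶠ w in 𝓝 (f z₀), f (g w) = w := by
    rw [← map_nhds_eq_of_injOn hf hs hg.injOn, eventually_map]
    filter_upwards [hs] with z hz using congrArg f (hg hz)
  refine (HasDerivAt.of_local_left_inverse (continuousAt_of_leftInvOn hf hs hg) ?_ hderiv
    hfg).differentiableAt
  rw [hz₀]
  exact hf.differentiableAt.hasDerivAt

-- Critical points are isolated, so the continuous inverse has at most a removable singularity.
lemma differentiableAt_of_leftInvOn (hf : AnalyticAt ℂ f z₀) (hs : s ∈ 𝓝 z₀)
    (hg : LeftInvOn g f s) : DifferentiableAt ℂ g (f z₀) := by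
  refine (Complex.analyticAt_of_differentiable_on_punctured_nhds_of_continuousAt ?_
    (continuousAt_of_leftInvOn hf hs hg)).differentiableAt
  rw [eventually_nhdsWithin_iff, ← map_nhds_eq_of_injOn hf hs hg.injOn, eventually_map]
  filter_upwards [hf.eventually_analyticAt, eventually_mem_nhds_iff.mpr hs,
    eventually_nhdsWithin_iff.mp (eventually_deriv_ne_zero_of_injOn hf hs hg.injOn)]
    with z hfz hsz hderiv hne
  exact differentiableAt_of_leftInvOn_of_deriv_ne_zero hfz hsz hg
    (hderiv fun hz ↦ hne (congrArg f hz))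

lemma deriv_mul_deriv_of_leftInvOn (hf : AnalyticAt ℂ f z₀) (hs : s ∈ 𝓝 z₀)
    (hg : LeftInvOn g f s) : deriv g (f z₀) * deriv f z₀ = 1 := by
  have hcomp := (differentiableAt_of_leftInvOn hf hs hg).hasDerivAt.comp z₀
    hf.differentiableAt.hasDerivAt
  have hid : g ∘ f =ᶠ[𝓝 z₀] id := by filter_upwards [hs] with z hz using hg hz
  exact (hcomp.congr_of_eventuallyEq hid.symm).unique (hasDerivAt_id z₀)

lemma deriv_ne_zero_of_injOn (hf : AnalyticAt ℂ f z₀) (hs : s ∈ 𝓝 z₀) (hinj : InjOn f s) :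
    deriv f z₀ ≠ 0 :=
  right_ne_zero_of_mul_eq_one (deriv_mul_deriv_of_leftInvOn hf hs hinj.leftInvOn_invFunOn)

-- The Schwarz lemma bounds the derivatives of `f` and of its inverse at the centres; their
-- product is `1`, so `f` is extremal in the Schwarz lemma.
lemma eqOn_affine_of_bijOn_ball {c : ℂ} {R₁ R₂ : ℝ} (hR₁ : 0 < R₁)
    (hf : DifferentiableOn ℂ f (ball c R₁)) (hbij : BijOn f (ball c R₁) (ball (f c) R₂)) :
    ∃ C ≠ 0, EqOn f (fun z ↦ f c + (z - c) * C) (ball c R₁) := by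
  have hc : c ∈ ball c R₁ := mem_ball_self hR₁
  have hR₂ : 0 < R₂ := pos_of_mem_ball (hbij.mapsTo hc)
  have hfan (z) (hz : z ∈ ball c R₁) : AnalyticAt ℂ f z := hf.analyticAt (isOpen_ball.mem_nhds hz)
  obtain ⟨g, hg⟩ : ∃ g, LeftInvOn g f (ball c R₁) := ⟨_, hbij.injOn.leftInvOn_invFunOn⟩
  have hgdiff : DifferentiableOn ℂ g (ball (f c) R₂) := by
    intro w hw
    obtain ⟨z, hz, rfl⟩ := hbij.surjOn hw
    exact (differentiableAt_of_leftInvOn (hfan z hz) (isOpen_ball.mem_nhds hz)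
      hg).differentiableWithinAt
  have hgmaps : MapsTo g (ball (f c) R₂) (closedBall (g (f c)) R₁) := by
    rw [hg hc]
    exact (hg.mapsTo hbij.surjOn).mono_right ball_subset_closedBall
  have hf_le : ‖deriv f c‖ ≤ R₂ / R₁ := Complex.norm_deriv_le_div_of_mapsTo_ball hf
    (hbij.mapsTo.mono_right ball_subset_closedBall) hR₁
  have hg_le : ‖deriv g (f c)‖ ≤ R₁ / R₂ :=
    Complex.norm_deriv_le_div_of_mapsTo_ball hgdiff hgmaps hR₂
  have hmul : ‖deriv g (f c)‖ * ‖deriv f c‖ = 1 := by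
    rw [← norm_mul, deriv_mul_deriv_of_leftInvOn (hfan c hc) (ball_mem_nhds c hR₁) hg, norm_one]
  have hf_eq : ‖deriv f c‖ = R₂ / R₁ := by
    refine hf_le.antisymm ?_
    rw [div_le_iff₀ hR₁]
    rw [le_div_iff₀ hR₂] at hg_le
    nlinarith [norm_nonneg (deriv f c)]
  obtain ⟨C, hC, hfC⟩ := Complex.affine_of_mapsTo_ball_of_exists_norm_dslope_eq_div' hf
    (hbij.mapsTo.mono_right ball_subset_closedBall) ⟨c, hc, by rwa [dslope_same]⟩
  exact ⟨C, norm_ne_zero_iff.mp (hC ▸ (div_pos hR₂ hR₁).ne'), hfC⟩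

end Univalent

section Blaschke

open Metric ComplexConjugate Pointwise

/-- The disc automorphism `z ↦ (z - a) / (1 - conj a * z)`, for `‖a‖ < 1`. -/
noncomputable def blaschke (a z : ℂ) : ℂ := (z - a) / (1 - conj a * z)

variable {a q z : ℂ}

lemma one_sub_mul_ne_zero (hq : ‖q‖ < 1) (hz : ‖z‖ < 1) : 1 - q * z ≠ 0 := by
  rw [sub_ne_zero]
  rintro h
  have hlt := mul_lt_one_of_nonneg_of_lt_one_left (norm_nonneg q) hq hz.le
  rw [← norm_mul, ← h, norm_one] at hlt
  exact lt_irrefl _ hlt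

lemma one_sub_conj_mul_ne_zero (ha : ‖a‖ < 1) (hz : ‖z‖ < 1) : 1 - conj a * z ≠ 0 :=
  one_sub_mul_ne_zero (by rwa [Complex.norm_conj]) hz

lemma norm_sq_one_sub_conj_mul_sub_norm_sq (a z : ℂ) :
    ‖1 - conj a * z‖ ^ 2 - ‖z - a‖ ^ 2 = (1 - ‖a‖ ^ 2) * (1 - ‖z‖ ^ 2) := by
  simp only [← Complex.normSq_eq_norm_sq, Complex.normSq_apply, Complex.sub_re, Complex.sub_im,
    Complex.mul_re, Complex.mul_im, Complex.conj_re, Complex.conj_im, Complex.one_re,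
    Complex.one_im]
  ring

lemma norm_blaschke_lt_one (ha : ‖a‖ < 1) (hz : ‖z‖ < 1) : ‖blaschke a z‖ < 1 := by
  rw [blaschke, norm_div, div_lt_one (norm_pos_iff.mpr (one_sub_conj_mul_ne_zero ha hz)),
    ← sq_lt_sq₀ (norm_nonneg _) (norm_nonneg _), ← sub_pos,
    norm_sq_one_sub_conj_mul_sub_norm_sq]
  have ha' := pow_lt_one₀ (norm_nonneg a) ha two_ne_zero
  have hz' := pow_lt_one₀ (norm_nonneg z) hz two_ne_zero
  exact mul_pos (sub_pos.mpr ha') (sub_pos.mpr hz')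

lemma blaschke_neg_blaschke (ha : ‖a‖ < 1) (hz : ‖z‖ < 1) : blaschke (-a) (blaschke a z) = z := by
  have hden := one_sub_conj_mul_ne_zero ha hz
  have hself := one_sub_conj_mul_ne_zero ha ha
  have hden' : 1 + conj a * ((z - a) / (1 - conj a * z)) = (1 - conj a * a) / (1 - conj a * z) := by
    field_simp
    ring
  rw [blaschke, blaschke, map_neg, neg_mul, sub_neg_eq_add, sub_neg_eq_add, hden',
    div_eq_iff (div_ne_zero hself hden), mul_div_assoc', eq_div_iff hden, add_mul,
    div_mul_cancel₀ _ hden]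
  ring

lemma bijOn_blaschke (ha : ‖a‖ < 1) : BijOn (blaschke a) (ball 0 1) (ball 0 1) := by
  have hmaps {b : ℂ} (hb : ‖b‖ < 1) : MapsTo (blaschke b) (ball 0 1) (ball 0 1) := fun z hz ↦
    mem_ball_zero_iff.mpr (norm_blaschke_lt_one hb (mem_ball_zero_iff.mp hz))
  have hinv {b : ℂ} (hb : ‖b‖ < 1) : LeftInvOn (blaschke (-b)) (blaschke b) (ball 0 1) :=
    fun z hz ↦ blaschke_neg_blaschke hb (mem_ball_zero_iff.mp hz)
  have ha' : ‖-a‖ < 1 := by rwa [norm_neg]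
  exact InvOn.bijOn ⟨hinv ha, by simpa only [neg_neg] using hinv ha'⟩ (hmaps ha) (hmaps ha')

lemma hasDerivAt_blaschke (ha : ‖a‖ < 1) (hz : ‖z‖ < 1) :
    HasDerivAt (blaschke a) ((1 - conj a * a) / (1 - conj a * z) ^ 2) z := by
  have hderiv := ((hasDerivAt_id z).sub_const a).div
    (((hasDerivAt_id z).const_mul (conj a)).const_sub 1) (one_sub_conj_mul_ne_zero ha hz)
  refine hderiv.congr_deriv ?_
  simp only [id]
  ring

lemma differentiableOn_blaschke (ha : ‖a‖ < 1) : DifferentiableOn ℂ (blaschke a) (ball 0 1) :=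
  fun _ hz ↦ (hasDerivAt_blaschke ha
    (mem_ball_zero_iff.mp hz)).differentiableAt.differentiableWithinAt

lemma image_add_mul_blaschke (c : ℂ) {C : ℂ} (hC : C ≠ 0) (ha : ‖a‖ < 1) :
    (fun z ↦ c + C * blaschke a z) '' ball 0 1 = ball c ‖C‖ := by
  calc (fun z ↦ c + C * blaschke a z) '' ball 0 1
      = (c + C * ·) '' (blaschke a '' ball 0 1) := by rw [image_image]
    _ = c +ᵥ C • ball (0 : ℂ) 1 := by
      rw [(bijOn_blaschke ha).image_eq, ← image_smul, ← image_vadd, image_image]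
      rfl
    _ = ball c ‖C‖ := by simp [smul_unitBall hC]

lemma exists_eqOn_add_mul_blaschke_of_image_eq_ball {F : ℂ → ℂ} {c : ℂ} {r : ℝ}
    (hF : DifferentiableOn ℂ F (ball 0 1)) (hinj : InjOn F (ball 0 1)) (hr : 0 < r)
    (himage : F '' ball 0 1 = ball c r) :
    ∃ C ≠ 0, ∃ a, ‖a‖ < 1 ∧ EqOn F (fun z ↦ c + C * blaschke a z) (ball 0 1) := by
  obtain ⟨a, ha, hFa⟩ : c ∈ F '' ball 0 1 := himage ▸ mem_ball_self hr
  rw [mem_ball_zero_iff] at ha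
  have ha' : ‖-a‖ < 1 := by rwa [norm_neg]
  have hcenter : (F ∘ blaschke (-a)) 0 = c := by simp [blaschke, hFa]
  have hbij : BijOn (F ∘ blaschke (-a)) (ball 0 1) (ball ((F ∘ blaschke (-a)) 0) r) := by
    rw [hcenter, ← himage]
    exact hinj.bijOn_image.comp (bijOn_blaschke ha')
  obtain ⟨C, hC, haffine⟩ := eqOn_affine_of_bijOn_ball one_pos
    (hF.comp (differentiableOn_blaschke ha') (bijOn_blaschke ha').mapsTo) hbij
  refine ⟨C, hC, a, ha, fun z hz ↦ ?_⟩
  have hz' := haffine ((bijOn_blaschke ha).mapsTo hz)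
  rw [hcenter, Function.comp_apply, blaschke_neg_blaschke ha (mem_ball_zero_iff.mp hz)] at hz'
  rw [hz']
  ring

lemma exists_eqOn_add_mul_blaschke_of_hasDerivAt {F : ℂ → ℂ} {κ q : ℂ} (hκ : κ ≠ 0)
    (hq : ‖q‖ < 1) (hF : ∀ z ∈ ball 0 1, HasDerivAt F (κ / (1 - q * z) ^ 2) z) :
    ∃ c, ∃ C ≠ 0, ∃ a, ‖a‖ < 1 ∧ EqOn F (fun z ↦ c + C * blaschke a z) (ball 0 1) := by
  obtain ⟨a, rfl⟩ : ∃ a, conj a = q := ⟨conj q, Complex.conj_conj q⟩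
  have ha : ‖a‖ < 1 := by rwa [Complex.norm_conj] at hq
  have hself : 1 - conj a * a ≠ 0 := one_sub_conj_mul_ne_zero ha ha
  have hderiv (z : ℂ) (hz : z ∈ ball 0 1) :
      HasDerivAt (fun z ↦ κ / (1 - conj a * a) * blaschke a z) (κ / (1 - conj a * z) ^ 2) z :=
    ((hasDerivAt_blaschke ha (mem_ball_zero_iff.mp hz)).const_mul _).congr_deriv
      (by rw [div_mul_div_cancel₀ hself])
  obtain ⟨c, hc⟩ := isOpen_ball.exists_eq_add_of_deriv_eq (convex_ball (0 : ℂ) 1).isPreconnected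
    (fun z hz ↦ (hF z hz).differentiableAt.differentiableWithinAt)
    (fun z hz ↦ (hderiv z hz).differentiableAt.differentiableWithinAt)
    (fun z hz ↦ (hF z hz).deriv.trans (hderiv z hz).deriv.symm)
  exact ⟨c, _, div_ne_zero hκ hself, a, ha, fun z hz ↦ (hc hz).trans (add_comm _ _)⟩

lemma exists_image_eq_ball_iff_deriv_eq {F F' : ℂ → ℂ} (hF : ∀ z ∈ ball 0 1, HasDerivAt F (F' z) z)
    (hinj : InjOn F (ball 0 1)) :
    (∃ c r, 0 < r ∧ F '' ball 0 1 = ball c r) ↔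
      ∃ κ ≠ 0, ∃ q, ‖q‖ < 1 ∧ ∀ z ∈ ball 0 1, F' z = κ / (1 - q * z) ^ 2 := by
  constructor
  · rintro ⟨c, r, hr, himage⟩
    obtain ⟨C, hC, a, ha, hFa⟩ := exists_eqOn_add_mul_blaschke_of_image_eq_ball
      (fun z hz ↦ (hF z hz).differentiableAt.differentiableWithinAt) hinj hr himage
    refine ⟨C * (1 - conj a * a), mul_ne_zero hC (one_sub_conj_mul_ne_zero ha ha), conj a,
      by rwa [Complex.norm_conj], fun z hz ↦ ?_⟩
    have hderiv := ((hasDerivAt_blaschke ha (mem_ball_zero_iff.mp hz)).const_mul C).const_add c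
    rw [mul_div_assoc]
    exact (hF z hz).unique (hderiv.congr_of_eventuallyEq (hFa.eventuallyEq_of_mem
      (isOpen_ball.mem_nhds hz)))
  · rintro ⟨κ, hκ, q, hq, hF'⟩
    obtain ⟨c, C, hC, a, ha, hFa⟩ := exists_eqOn_add_mul_blaschke_of_hasDerivAt hκ hq
      fun z hz ↦ hF' z hz ▸ hF z hz
    exact ⟨c, ‖C‖, norm_pos_iff.mpr hC, hFa.image_eq.trans (image_add_mul_blaschke c hC ha)⟩

end Blaschke

section SquareRoot

open Filter Metric Topology

lemma differentiableAt_of_sq_eq {f h : ℂ → ℂ} {z₀ : ℂ} (hsq : ∀ z, f z ^ 2 = h z)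
    (hf : ContinuousAt f z₀) (hh : DifferentiableAt ℂ h z₀) (hne : h z₀ ≠ 0) :
    DifferentiableAt ℂ f z₀ := by
  have hf₀ : f z₀ + f z₀ ≠ 0 := by
    rw [← two_mul]
    exact mul_ne_zero two_ne_zero (pow_ne_zero_iff two_ne_zero |>.mp (hsq z₀ ▸ hne))
  have hsum : Tendsto (fun z ↦ f z + f z₀) (𝓝[≠] z₀) (𝓝 (f z₀ + f z₀)) :=
    (hf.tendsto.mono_left nhdsWithin_le_nhds).add_const _
  refine (hasDerivAt_iff_tendsto_slope.mpr ((hh.hasDerivAt.tendsto_slope.div hsum hf₀).congr'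
    ?_)).differentiableAt
  filter_upwards [hsum.eventually_ne hf₀] with z hz
  rw [Pi.div_apply, slope_def_field, slope_def_field, ← hsq, ← hsq, sq_sub_sq, div_div,
    mul_comm (f z + f z₀), mul_div_mul_right _ _ hz]

lemma isSimplyConnected_ball {E : Type*} [NormedAddCommGroup E] [NormedSpace ℝ E] (c : E) {r : ℝ}
    (hr : 0 < r) : IsSimplyConnected (ball c r) :=
  have := contractibleSpace_ball (x := c) hr
  SimplyConnectedSpace.ofContractible _

lemma exists_differentiableOn_sq_eq {h : ℂ → ℂ} {s : Set ℂ} (hs : IsSimplyConnected s)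
    (hso : IsOpen s) (hh : DifferentiableOn ℂ h s) (hne : ∀ z ∈ s, h z ≠ 0) :
    ∃ f : ℂ → ℂ, DifferentiableOn ℂ f s ∧ ∀ z, f z ^ 2 = h z := by
  obtain ⟨f, hf, hsq⟩ := Complex.exists_continuousOn_pow_eq hs hso hh.continuousOn
    (fun ⟨z, hz, hz₀⟩ ↦ hne z hz hz₀) two_ne_zero
  exact ⟨f, fun z hz ↦ (differentiableAt_of_sq_eq hsq (hf.continuousAt (hso.mem_nhds hz))
    (hh.differentiableAt (hso.mem_nhds hz)) (hne z hz)).differentiableWithinAt, hsq⟩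

end SquareRoot

section Parseval

open Filter Metric Polynomial Topology

/-- `f` is the sum of the power series `∑ a n * z ^ n` in the open unit disc. -/
def HasDiscExpansion (f : ℂ → ℂ) (a : ℕ → ℂ) : Prop :=
  ∀ z ∈ ball 0 1, HasSum (fun n ↦ a n * z ^ n) (f z)

variable {f : ℂ → ℂ} {a : ℕ → ℂ} {K : ℂ → ℝ}

lemma exists_hasDiscExpansion (hf : DifferentiableOn ℂ f (ball 0 1)) :
    ∃ a, HasDiscExpansion f a := by
  refine ⟨fun n ↦ (n.factorial : ℂ)⁻¹ * iteratedDeriv n f 0, fun z hz ↦ ?_⟩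
  have htaylor := Complex.hasSum_taylorSeries_on_ball (r := 1) hf hz
  refine htaylor.congr_fun fun n ↦ ?_
  rw [smul_eq_mul, smul_eq_mul, sub_zero]
  ring

lemma circleAverage_norm_sq_sum (b : ℕ → ℂ) (N : ℕ) :
    circleAverage (fun z ↦ ‖∑ n ∈ Finset.range N, b n * z ^ n‖ ^ 2) 0 1 =
      ∑ n ∈ Finset.range N, ‖b n‖ ^ 2 := by
  set p : ℂ[X] := ∑ n ∈ Finset.range N, monomial n (b n)
  have hcoeff (n : ℕ) : p.coeff n = if n < N then b n else 0 := by simp [p, coeff_monomial]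
  have hsupport : p.support ⊆ Finset.range N := fun n hn ↦ by
    by_contra hN
    exact mem_support_iff.mp hn (by rw [hcoeff, if_neg (mt Finset.mem_range.mpr hN)])
  calc circleAverage (fun z ↦ ‖∑ n ∈ Finset.range N, b n * z ^ n‖ ^ 2) 0 1
      = ∑ n ∈ p.support, ‖p.coeff n‖ ^ 2 := by
        rw [p.sum_sq_norm_coeff_eq_circleAverage]
        simp [p, eval_finsetSum]
    _ = ∑ n ∈ Finset.range N, ‖p.coeff n‖ ^ 2 := Finset.sum_subset hsupport fun n _ hn ↦ by
        rw [notMem_support_iff.mp hn, norm_zero, zero_pow two_ne_zero]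
    _ = ∑ n ∈ Finset.range N, ‖b n‖ ^ 2 := Finset.sum_congr rfl fun n hn ↦ by
        rw [hcoeff, if_pos (Finset.mem_range.mp hn)]

lemma hasSum_norm_sq_circleAverage {b : ℕ → ℂ} (hb : Summable (fun n ↦ ‖b n‖)) :
    HasSum (fun n ↦ ‖b n‖ ^ 2) (circleAverage (fun z ↦ ‖∑' n, b n * z ^ n‖ ^ 2) 0 1) := by
  rw [hasSum_iff_tendsto_nat_of_nonneg (fun n ↦ by positivity)]
  simp only [← circleAverage_norm_sq_sum]
  refine Tendsto.const_smul (intervalIntegral.tendsto_integral_filter_of_dominated_convergence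
    (fun _ ↦ (∑' n, ‖b n‖) ^ 2) ?_ ?_ intervalIntegrable_const ?_) _
  · exact .of_forall fun N ↦ Continuous.aestronglyMeasurable (by fun_prop)
  · refine .of_forall fun N ↦ .of_forall fun φ _ ↦ ?_
    rw [norm_pow, norm_norm]
    gcongr
    exact (norm_sum_le _ _).trans (by simpa using hb.sum_le_tsum _ fun _ _ ↦ norm_nonneg _)
  · refine .of_forall fun φ _ ↦ ?_
    have hsummable : Summable (fun n ↦ b n * circleMap 0 1 φ ^ n) :=
      .of_norm (by simpa using hb)
    exact hsummable.hasSum.tendsto_sum_nat.norm.pow 2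

lemma hasSum_of_tendsto_of_le {α ι : Type*} {l : Filter α} [l.NeBot] {g : α → ι → ℝ} {c : ι → ℝ}
    {s : α → ℝ} {L : ℝ} (hnonneg : ∀ᶠ x in l, ∀ i, 0 ≤ g x i) (hle : ∀ᶠ x in l, ∀ i, g x i ≤ c i)
    (hlim : ∀ i, Tendsto (g · i) l (𝓝 (c i))) (hsum : ∀ᶠ x in l, HasSum (g x) (s x))
    (hs : Tendsto s l (𝓝 L)) : HasSum c L := by
  have hc (i : ι) : 0 ≤ c i := ge_of_tendsto (hlim i) (hnonneg.mono fun _ h ↦ h i)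
  have hpartial (t : Finset ι) : ∑ i ∈ t, c i ≤ L := by
    refine le_of_tendsto_of_tendsto (tendsto_finsetSum t fun i _ ↦ hlim i) hs ?_
    filter_upwards [hnonneg, hsum] with x hx hsx using sum_le_hasSum t (fun i _ ↦ hx i) hsx
  have hsummable : Summable c := summable_of_sum_le hc hpartial
  have htsum : ∑' i, c i = L := by
    refine le_antisymm (hsummable.tsum_le_of_sum_le hpartial) (le_of_tendsto hs ?_)
    filter_upwards [hle, hsum] with x hx hsx using hasSum_le hx hsx hsummable.hasSum
  exact htsum ▸ hsummable.hasSum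

lemma continuousOn_circleAverage_of_closedBall {E : Type*} [NormedAddCommGroup E] [NormedSpace ℝ E]
    {g : ℂ → E} {c : ℂ} {R : ℝ} (hg : ContinuousOn g (closedBall c R)) :
    ContinuousOn (circleAverage g c) (Icc 0 R) :=
  ContinuousOn.circleAverage (hg.mono fun _ hz ↦ mem_closedBall_iff_norm.mpr hz.2) fun _ hr ↦ hr.1

namespace HasDiscExpansion

lemma hasSum_circleAverage (hf : HasDiscExpansion f a) {R : ℝ} (hR₀ : 0 ≤ R) (hR : R < 1) :
    HasSum (fun n ↦ ‖a n‖ ^ 2 * R ^ (2 * n)) (circleAverage (‖f ·‖ ^ 2) 0 R) := by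
  have hmem {z : ℂ} (hz : ‖z‖ ≤ 1) : R * z ∈ ball (0 : ℂ) 1 := by
    rw [mem_ball_zero_iff, norm_mul, Complex.norm_of_nonneg hR₀]
    exact (mul_le_of_le_one_right hR₀ hz).trans_lt hR
  have hsummable : Summable (fun n ↦ ‖a n * (R : ℂ) ^ n‖) := by
    simpa using (hf _ (hmem norm_one.le)).summable.norm
  convert hasSum_norm_sq_circleAverage hsummable using 1
  · ext n
    rw [norm_mul, norm_pow, Complex.norm_of_nonneg hR₀, mul_pow, ← pow_mul, mul_comm n]
  · rw [circleAverage_eq_circleAverage_zero_one]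
    refine circleAverage_congr_sphere fun z hz ↦ ?_
    have hz' : ‖z‖ ≤ 1 := by simpa using (mem_sphere_zero_iff_norm.mp hz).le
    simp only [add_zero, ← (hf _ (hmem hz')).tsum_eq, mul_pow, mul_assoc]

lemma hasSum_circleAverage_of_eqOn (hf : HasDiscExpansion f a) (hKf : EqOn K (‖f ·‖ ^ 2) (ball 0 1))
    {R : ℝ} (hR₀ : 0 ≤ R) (hR : R < 1) :
    HasSum (fun n ↦ ‖a n‖ ^ 2 * R ^ (2 * n)) (circleAverage K 0 R) := by
  have hsphere : sphere (0 : ℂ) |R| ⊆ ball 0 1 := fun z hz ↦ by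
    rwa [mem_ball_zero_iff, mem_sphere_zero_iff_norm.mp hz, abs_of_nonneg hR₀]
  rw [circleAverage_congr_sphere (hKf.mono hsphere)]
  exact hf.hasSum_circleAverage hR₀ hR

lemma hasSum_circleAverage_one (hf : HasDiscExpansion f a) (hK : ContinuousOn K (closedBall 0 1))
    (hKf : EqOn K (‖f ·‖ ^ 2) (ball 0 1)) :
    HasSum (fun n ↦ ‖a n‖ ^ 2) (circleAverage K 0 1) := by
  have hIoo : ∀ᶠ R : ℝ in 𝓝[<] 1, R ∈ Ioo 0 1 := Ioo_mem_nhdsLT one_pos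
  have hlim : Tendsto (circleAverage K 0) (𝓝[<] 1) (𝓝 (circleAverage K 0 1)) :=
    ((continuousOn_circleAverage_of_closedBall hK).continuousWithinAt
      (right_mem_Icc.mpr zero_le_one)).mono_of_mem_nhdsWithin (Icc_mem_nhdsLT one_pos)
  refine hasSum_of_tendsto_of_le (g := fun R n ↦ ‖a n‖ ^ 2 * R ^ (2 * n)) ?_ ?_ (fun n ↦ ?_) ?_ hlim
  · filter_upwards [hIoo] with R hR n
    have := hR.1
    positivity
  · filter_upwards [hIoo] with R hR n
    exact mul_le_of_le_one_right (by positivity) (pow_le_one₀ hR.1.le hR.2.le)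
  · have hcont : Continuous (fun R : ℝ ↦ ‖a n‖ ^ 2 * R ^ (2 * n)) := by fun_prop
    simpa using (hcont.tendsto 1).mono_left nhdsWithin_le_nhds
  · filter_upwards [hIoo] with R hR using hf.hasSum_circleAverage_of_eqOn hKf hR.1.le hR.2

end HasDiscExpansion

end Parseval

section Area

open Metric

lemma complex_polarCoord_symm_eq_circleMap (p : ℝ × ℝ) :
    Complex.polarCoord.symm p = circleMap 0 p.1 p.2 := by
  rw [Complex.polarCoord_symm_apply, circleMap_zero, Complex.exp_mul_I, Complex.ofReal_cos,
    Complex.ofReal_sin]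

section Polar

variable {E : Type*} [NormedAddCommGroup E] [NormedSpace ℝ E] {R : ℝ}

lemma setIntegral_ball_eq_setIntegral_prod (g : ℂ → E) (R : ℝ) :
    ∫ z in ball 0 R, g z =
      ∫ p in Ioo 0 R ×ˢ Ioo (-π) π, p.1 • g (circleMap 0 p.1 p.2) := by
  have hpre : MeasurableSet {p : ℝ × ℝ | circleMap 0 p.1 p.2 ∈ ball 0 R} :=
    (isOpen_ball.preimage (by fun_prop)).measurableSet
  have htarget : Ioo 0 R ×ˢ Ioo (-π) π =
      polarCoord.target ∩ {p | circleMap 0 p.1 p.2 ∈ ball 0 R} := by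
    ext p
    simp only [polarCoord_target, mem_inter_iff, mem_prod, mem_ofPred_eq, mem_ball_zero_iff,
      norm_circleMap_zero, mem_Ioo, mem_Ioi]
    grind
  rw [← integral_indicator measurableSet_ball, ← Complex.integral_comp_polarCoord_symm, htarget,
    ← setIntegral_indicator hpre]
  refine setIntegral_congr_fun polarCoord.open_target.measurableSet fun p _ ↦ ?_
  simp only [indicator, mem_ofPred_eq, complex_polarCoord_symm_eq_circleMap, smul_ite, smul_zero]
  congr
  exact complex_polarCoord_symm_eq_circleMap p

lemma setIntegral_Ioo_circleMap (g : ℂ → E) (r : ℝ) :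
    ∫ θ in Ioo (-π) π, g (circleMap 0 r θ) = (2 * π) • circleAverage g 0 r := by
  have hperiodic : Function.Periodic (fun θ ↦ g (circleMap 0 r θ)) (2 * π) := fun θ ↦
    congrArg g (periodic_circleMap 0 r θ)
  have hshift := hperiodic.intervalIntegral_add_eq (-π) 0
  rw [zero_add, show -π + 2 * π = π by ring] at hshift
  rw [circleAverage, smul_inv_smul₀ two_pi_pos.ne', ← hshift,
    intervalIntegral.integral_of_le (by linarith [pi_pos]), integral_Ioc_eq_integral_Ioo]

lemma integral_ball_eq_integral_circleAverage {g : ℂ → E} (hR : 0 ≤ R)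
    (hg : ContinuousOn g (closedBall 0 R)) :
    ∫ z in ball 0 R, g z = ∫ r in 0..R, (2 * π * r) • circleAverage g 0 r := by
  have hcont : ContinuousOn (fun p : ℝ × ℝ ↦ p.1 • g (circleMap 0 p.1 p.2))
      (Icc 0 R ×ˢ Icc (-π) π) := by
    refine continuousOn_fst.smul (hg.comp (Continuous.continuousOn (by fun_prop)) fun p hp ↦ ?_)
    simpa [abs_of_nonneg hp.1.1] using hp.1.2
  have hint : IntegrableOn _ (Ioo 0 R ×ˢ Ioo (-π) π) (volume.prod volume) :=
    (hcont.integrableOn_compact (isCompact_Icc.prod isCompact_Icc)).mono_set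
      (prod_mono Ioo_subset_Icc_self Ioo_subset_Icc_self)
  rw [setIntegral_ball_eq_setIntegral_prod, Measure.volume_eq_prod, setIntegral_prod _ hint,
    intervalIntegral.integral_of_le hR, integral_Ioc_eq_integral_Ioo]
  refine setIntegral_congr_fun measurableSet_Ioo fun r _ ↦ ?_
  simp only [integral_smul, setIntegral_Ioo_circleMap, smul_smul, mul_comm r]

end Polar

variable {f : ℂ → ℂ} {a : ℕ → ℂ} {K : ℂ → ℝ}

lemma integral_mul_pow_add_one (c : ℝ) (n : ℕ) :
    ∫ r in (0 : ℝ)..1, 2 * π * r * (c * r ^ (2 * n)) = π * (c / (n + 1)) := by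
  have hintegrand (r : ℝ) : 2 * π * r * (c * r ^ (2 * n)) = 2 * π * c * r ^ (2 * n + 1) := by ring
  simp only [hintegrand, intervalIntegral.integral_const_mul, integral_pow]
  push_cast
  field_simp
  ring

lemma HasDiscExpansion.hasSum_integral_ball (hf : HasDiscExpansion f a)
    (hK : ContinuousOn K (closedBall 0 1)) (hKf : EqOn K (‖f ·‖ ^ 2) (ball 0 1)) :
    HasSum (fun n : ℕ ↦ π * (‖a n‖ ^ 2 / (n + 1))) (∫ z in ball 0 1, K z) := by
  have hsum (r : ℝ) (hr₀ : 0 ≤ r) (hr : r < 1) : HasSum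
      (fun n ↦ 2 * π * r * (‖a n‖ ^ 2 * r ^ (2 * n))) (2 * π * r * circleAverage K 0 r) :=
    (hf.hasSum_circleAverage_of_eqOn hKf hr₀ hr).mul_left _
  have hIoc : ∀ᵐ r : ℝ, r ∈ uIoc 0 1 → 0 ≤ r ∧ r < 1 := by
    filter_upwards [Measure.ae_ne volume 1] with r hr hmem
    rw [uIoc_of_le zero_le_one] at hmem
    exact ⟨hmem.1.le, hmem.2.lt_of_ne hr⟩
  rw [integral_ball_eq_integral_circleAverage zero_le_one hK]
  simp only [← integral_mul_pow_add_one, smul_eq_mul]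
  refine intervalIntegral.hasSum_integral_of_dominated_convergence
    (fun n r ↦ 2 * π * r * (‖a n‖ ^ 2 * r ^ (2 * n))) (fun n ↦ ?_) (fun n ↦ ?_) ?_ ?_ ?_
  · exact Continuous.aestronglyMeasurable (by fun_prop)
  · filter_upwards [hIoc] with r hr hmem
    have := (hr hmem).1
    exact (Real.norm_of_nonneg (by positivity)).le
  · filter_upwards [hIoc] with r hr hmem using (hsum r (hr hmem).1 (hr hmem).2).summable
  · have hcont : ContinuousOn (fun r ↦ 2 * π * r * circleAverage K 0 r) (uIcc 0 1) := by
      rw [uIcc_of_le zero_le_one]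
      exact (continuous_const.mul continuous_id).continuousOn.mul
        (continuousOn_circleAverage_of_closedBall hK)
    refine hcont.intervalIntegrable.congr_ae ?_
    rw [Filter.EventuallyEq, ae_restrict_iff' measurableSet_uIoc]
    filter_upwards [hIoc] with r hr hmem using (hsum r (hr hmem).1 (hr hmem).2).tsum_eq.symm
  · filter_upwards [hIoc] with r hr hmem using hsum r (hr hmem).1 (hr hmem).2

end Area

section Carleman

open Metric Finset.HasAntidiagonal

lemma sum_norm_sub_mean_sq {E ι : Type*} [NormedAddCommGroup E] [InnerProductSpace ℝ E]
    (s : Finset ι) (v : ι → E) :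
    ∑ i ∈ s, ‖v i - (s.card : ℝ)⁻¹ • ∑ j ∈ s, v j‖ ^ 2 =
      ∑ i ∈ s, ‖v i‖ ^ 2 - (s.card : ℝ)⁻¹ * ‖∑ i ∈ s, v i‖ ^ 2 := by
  rcases s.eq_empty_or_nonempty with rfl | hs
  · simp
  have hcard : (s.card : ℝ) ≠ 0 := Nat.cast_ne_zero.mpr hs.card_ne_zero
  simp only [norm_sub_sq_real, inner_smul_right, Finset.sum_add_distrib, Finset.sum_sub_distrib,
    ← Finset.mul_sum, ← sum_inner, real_inner_self_eq_norm_sq, Finset.sum_const, norm_smul,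
    norm_inv, Real.norm_natCast, nsmul_eq_mul]
  field_simp
  ring

lemma hasSum_sum_antidiagonal_sq {R : Type*} [NormedRing R] [CompleteSpace R] {b : ℕ → R} {x : R}
    (hb : HasSum b x) (hnorm : Summable (‖b ·‖)) :
    HasSum (fun n ↦ ∑ p ∈ antidiagonal n, b p.1 * b p.2) (x ^ 2) := by
  rw [sq, ← hb.tsum_eq, tsum_mul_tsum_eq_tsum_sum_antidiagonal_of_summable_norm hnorm hnorm]
  exact (summable_norm_sum_mul_antidiagonal_of_summable_norm hnorm hnorm).of_norm.hasSum

lemma eq_mul_div_pow_of_mul_succ_eq {𝕜 : Type*} [Field 𝕜] {a : ℕ → 𝕜} (ha : a 0 ≠ 0)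
    (hmul : ∀ n, a 0 * a (n + 1) = a 1 * a n) (n : ℕ) : a n = a 0 * (a 1 / a 0) ^ n := by
  induction n with
  | zero => simp
  | succ n ih =>
    rw [pow_succ, ← mul_assoc, ← ih, mul_div_assoc', eq_div_iff ha]
    linear_combination hmul n

variable {f : ℂ → ℂ} {a : ℕ → ℂ} {K : ℂ → ℝ}

namespace HasDiscExpansion

lemma sq (hf : HasDiscExpansion f a) :
    HasDiscExpansion (f ^ 2) (fun n ↦ ∑ p ∈ antidiagonal n, a p.1 * a p.2) := by
  intro z hz
  refine (hasSum_sum_antidiagonal_sq (hf z hz) (hf z hz).summable.norm).congr_fun fun n ↦ ?_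
  rw [Finset.sum_mul]
  refine Finset.sum_congr rfl fun p hp ↦ ?_
  rw [← mem_antidiagonal.mp hp, pow_add]
  ring

lemma hasSum_carleman_deficit (hf : HasDiscExpansion f a) (hK : ContinuousOn K (closedBall 0 1))
    (hKf : EqOn K (‖f ·‖ ^ 2) (ball 0 1)) :
    HasSum (fun n ↦ ∑ p ∈ antidiagonal n,
        ‖a p.1 * a p.2 - (n + 1 : ℝ)⁻¹ • ∑ p ∈ antidiagonal n, a p.1 * a p.2‖ ^ 2)
      (circleAverage K 0 1 ^ 2 - π⁻¹ * ∫ z in ball 0 1, K z ^ 2) := by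
  have hcircle := hf.hasSum_circleAverage_one hK hKf
  have harea := hf.sq.hasSum_integral_ball (hK.pow 2) fun z hz ↦ by
    simp only [Pi.pow_apply, norm_pow, hKf hz]
  refine ((hasSum_sum_antidiagonal_sq hcircle hcircle.summable.norm).sub
    (harea.mul_left π⁻¹)).congr_fun fun n ↦ ?_
  have hvariance := sum_norm_sub_mean_sq (antidiagonal n) (fun p ↦ a p.1 * a p.2)
  rw [Finset.Nat.card_antidiagonal, Nat.cast_add_one] at hvariance
  rw [hvariance, inv_mul_cancel_left₀ pi_pos.ne', div_eq_inv_mul]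
  simp only [norm_mul, mul_pow]

lemma integral_ball_sq_eq_iff (hf : HasDiscExpansion f a) (hK : ContinuousOn K (closedBall 0 1))
    (hKf : EqOn K (‖f ·‖ ^ 2) (ball 0 1)) (ha : a 0 ≠ 0) :
    ∫ z in ball 0 1, K z ^ 2 = π * circleAverage K 0 1 ^ 2 ↔ ∃ q, ∀ n, a n = a 0 * q ^ n := by
  have hdeficit := hf.hasSum_carleman_deficit hK hKf
  have hiff : ∫ z in ball 0 1, K z ^ 2 = π * circleAverage K 0 1 ^ 2 ↔
      circleAverage K 0 1 ^ 2 - π⁻¹ * ∫ z in ball 0 1, K z ^ 2 = 0 := by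
    rw [sub_eq_zero, eq_inv_mul_iff_mul_eq₀ pi_pos.ne', eq_comm]
  rw [hiff]
  constructor
  · intro hzero
    rw [hzero, hasSum_zero_iff_of_nonneg fun n ↦ by positivity] at hdeficit
    have hmean (n : ℕ) (p) (hp : p ∈ antidiagonal n) :
        a p.1 * a p.2 = (n + 1 : ℝ)⁻¹ • ∑ p ∈ antidiagonal n, a p.1 * a p.2 := by
      have hn := (Finset.sum_eq_zero_iff_of_nonneg fun _ _ ↦ by positivity).mp
        (congrFun hdeficit n) p hp
      rwa [sq_eq_zero_iff, norm_eq_zero, sub_eq_zero] at hn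
    exact ⟨a 1 / a 0, eq_mul_div_pow_of_mul_succ_eq ha fun n ↦
      (hmean (n + 1) (0, n + 1) (by simp)).trans (hmean (n + 1) (1, n) (by simp [add_comm])).symm⟩
  · rintro ⟨q, hq⟩
    refine hdeficit.unique (hasSum_zero.congr_fun fun n ↦ Finset.sum_eq_zero fun p hp ↦ ?_)
    have hconst (p) (hp : p ∈ antidiagonal n) : a p.1 * a p.2 = a 0 ^ 2 * q ^ n := by
      rw [hq p.1, hq p.2, ← mem_antidiagonal.mp hp, pow_add]
      ring
    have hn : (n + 1 : ℝ) ≠ 0 := by positivity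
    rw [Finset.sum_congr rfl hconst, hconst p hp, Finset.sum_const, Finset.Nat.card_antidiagonal,
      ← Nat.cast_smul_eq_nsmul ℝ, Nat.cast_add_one, inv_smul_smul₀ hn, sub_self, norm_zero,
      zero_pow two_ne_zero]

end HasDiscExpansion

lemma hasDiscExpansion_geometric {q : ℂ} (hq : ‖q‖ < 1) {c : ℂ}
    (hf : ∀ z ∈ ball 0 1, f z = c / (1 - q * z)) : HasDiscExpansion f (fun n ↦ c * q ^ n) := by
  intro z hz
  have hqz : ‖q * z‖ < 1 := by
    rw [norm_mul]
    exact mul_lt_one_of_nonneg_of_lt_one_left (norm_nonneg q) hq (mem_ball_zero_iff.mp hz).le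
  simpa only [hf z hz, mul_pow, mul_assoc, div_eq_mul_inv] using
    (hasSum_geometric_of_norm_lt_one hqz).mul_left c

theorem carleman_inequality (hf : DifferentiableOn ℂ f (ball 0 1))
    (hK : ContinuousOn K (closedBall 0 1)) (hKf : EqOn K (‖f ·‖ ^ 2) (ball 0 1)) :
    ∫ z in ball 0 1, K z ^ 2 ≤ π * circleAverage K 0 1 ^ 2 := by
  obtain ⟨a, ha⟩ := exists_hasDiscExpansion hf
  have hnonneg := (ha.hasSum_carleman_deficit hK hKf).nonneg fun n ↦ by positivity
  rwa [sub_nonneg, inv_mul_le_iff₀ pi_pos] at hnonneg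

theorem carleman_equality_iff (hf : DifferentiableOn ℂ f (ball 0 1))
    (hK : ContinuousOn K (closedBall 0 1)) (hKf : EqOn K (‖f ·‖ ^ 2) (ball 0 1)) (hf₀ : f 0 ≠ 0) :
    ∫ z in ball 0 1, K z ^ 2 = π * circleAverage K 0 1 ^ 2 ↔
      ∃ q, ‖q‖ < 1 ∧ ∀ z ∈ ball 0 1, f z = f 0 / (1 - q * z) := by
  constructor
  · intro heq
    obtain ⟨a, ha⟩ := exists_hasDiscExpansion hf
    have ha₀ : a 0 = f 0 := by
      have h0 := (ha 0 (mem_ball_self one_pos)).tsum_eq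
      rwa [tsum_eq_single 0 fun n hn ↦ by simp [hn], pow_zero, mul_one] at h0
    obtain ⟨q, hq⟩ := (ha.integral_ball_sq_eq_iff hK hKf (ha₀ ▸ hf₀)).mp heq
    rw [ha₀] at hq
    have hq₁ : ‖q‖ < 1 := by
      have hsummable := (ha.hasSum_circleAverage_one hK hKf).summable
      simp only [hq, norm_mul, norm_pow, mul_pow, ← pow_mul, mul_comm _ 2] at hsummable
      simp only [pow_mul] at hsummable
      rw [summable_mul_left_iff (by positivity), summable_geometric_iff_norm_lt_one] at hsummable
      simpa using hsummable
    refine ⟨q, hq₁, fun z hz ↦ (ha z hz).unique ?_⟩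
    simpa only [hq] using
      hasDiscExpansion_geometric (f := fun z ↦ f 0 / (1 - q * z)) hq₁ (fun _ _ ↦ rfl) z hz
  · rintro ⟨q, hq, hfq⟩
    exact ((hasDiscExpansion_geometric hq hfq).integral_ball_sq_eq_iff hK hKf (by simpa)).mpr
      ⟨q, fun n ↦ by simp⟩

end Carleman

section CauchySchwarz

open Metric

section L2

variable {α : Type*} [MeasurableSpace α] {μ : Measure α} {f g : α → ℝ}

lemma integral_sq_mul_sub_mul (hf : MemLp f 2 μ) (hg : MemLp g 2 μ) (A B : ℝ) :
    ∫ x, (A * g x - B * f x) ^ 2 ∂μ =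
      A ^ 2 * ∫ x, g x ^ 2 ∂μ - 2 * A * B * ∫ x, f x * g x ∂μ + B ^ 2 * ∫ x, f x ^ 2 ∂μ := by
  have hfg : Integrable (fun x ↦ f x * g x) μ := hf.integrable_mul hg
  have hexpand (x : α) : (A * g x - B * f x) ^ 2 =
      A ^ 2 * g x ^ 2 - 2 * A * B * (f x * g x) + B ^ 2 * f x ^ 2 := by ring
  simp only [hexpand]
  rw [integral_add _ (hf.integrable_sq.const_mul _),
    integral_sub (hg.integrable_sq.const_mul _) (hfg.const_mul _)]
  · simp only [integral_const_mul]
  · exact (hg.integrable_sq.const_mul _).sub (hfg.const_mul _)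

lemma integral_sq_cauchySchwarz_defect (hf : MemLp f 2 μ) (hg : MemLp g 2 μ) :
    ∫ x, ((∫ y, f y ^ 2 ∂μ) * g x - (∫ y, f y * g y ∂μ) * f x) ^ 2 ∂μ =
      (∫ x, f x ^ 2 ∂μ) *
        ((∫ x, f x ^ 2 ∂μ) * ∫ x, g x ^ 2 ∂μ - (∫ x, f x * g x ∂μ) ^ 2) := by
  rw [integral_sq_mul_sub_mul hf hg]
  ring

lemma sq_integral_mul_le (hf : MemLp f 2 μ) (hg : MemLp g 2 μ) :
    (∫ x, f x * g x ∂μ) ^ 2 ≤ (∫ x, f x ^ 2 ∂μ) * ∫ x, g x ^ 2 ∂μ := by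
  rcases (integral_nonneg fun x ↦ sq_nonneg (f x) : 0 ≤ ∫ x, f x ^ 2 ∂μ).eq_or_lt with hzero | hpos
  · have hf₀ := (integral_eq_zero_iff_of_nonneg (fun x ↦ sq_nonneg (f x)) hf.integrable_sq).mp
      hzero.symm
    have hfg : ∫ x, f x * g x ∂μ = 0 := integral_eq_zero_of_ae <| hf₀.mono fun x hx ↦
      mul_eq_zero_of_left (pow_eq_zero_iff two_ne_zero |>.mp hx) (g x)
    rw [hfg, ← hzero, zero_mul, zero_pow two_ne_zero]
  have hnonneg := (integral_sq_cauchySchwarz_defect hf hg).symm.trans_ge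
    (integral_nonneg fun x ↦ sq_nonneg _)
  exact sub_nonneg.mp (nonneg_of_mul_nonneg_right hnonneg hpos)

lemma sq_integral_mul_eq_iff (hf : MemLp f 2 μ) (hg : MemLp g 2 μ)
    (hpos : 0 < ∫ x, f x ^ 2 ∂μ) :
    (∫ x, f x * g x ∂μ) ^ 2 = (∫ x, f x ^ 2 ∂μ) * ∫ x, g x ^ 2 ∂μ ↔ ∃ c : ℝ, g =ᵐ[μ] c • f := by
  constructor
  · intro heq
    have hdefect := integral_sq_cauchySchwarz_defect hf hg
    rw [heq, sub_self, mul_zero] at hdefect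
    replace hdefect := (integral_eq_zero_iff_of_nonneg (fun x ↦ sq_nonneg _)
      ((hg.const_mul _).sub (hf.const_mul _)).integrable_sq).mp hdefect
    refine ⟨(∫ x, f x * g x ∂μ) / ∫ x, f x ^ 2 ∂μ, hdefect.mono fun x hx ↦ ?_⟩
    have hprop : (∫ y, f y ^ 2 ∂μ) * g x = (∫ y, f y * g y ∂μ) * f x :=
      sub_eq_zero.mp (pow_eq_zero_iff two_ne_zero |>.mp hx)
    rw [Pi.smul_apply, smul_eq_mul, div_mul_eq_mul_div, eq_div_iff hpos.ne', mul_comm, hprop]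
  · rintro ⟨c, hc⟩
    have hfg : ∫ x, f x * g x ∂μ = c * ∫ x, f x ^ 2 ∂μ := by
      rw [← integral_const_mul]
      refine integral_congr_ae (hc.mono fun x hx ↦ ?_)
      simp only [hx, Pi.smul_apply, smul_eq_mul]
      ring
    have hgg : ∫ x, g x ^ 2 ∂μ = c ^ 2 * ∫ x, f x ^ 2 ∂μ := by
      rw [← integral_const_mul]
      refine integral_congr_ae (hc.mono fun x hx ↦ ?_)
      simp only [hx, Pi.smul_apply, smul_eq_mul, mul_pow]
    rw [hfg, hgg]
    ring

end L2

lemma exists_eqOn_const_of_norm_sq_eq {G : ℂ → ℂ} {U : Set ℂ} (hU : IsPreconnected U)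
    (hUo : IsOpen U) (hG : DifferentiableOn ℂ G U) {c : ℝ} (hc : ∀ z ∈ U, ‖G z‖ ^ 2 = c) :
    ∃ k, ∀ z ∈ U, G z = k := by
  rcases U.eq_empty_or_nonempty with rfl | ⟨z₀, hz₀⟩
  · simp
  refine ⟨G z₀, Complex.eqOn_of_isPreconnected_of_isMaxOn_norm hU hUo hG hz₀ fun z hz ↦ ?_⟩
  exact (pow_le_pow_iff_left₀ (norm_nonneg _) (norm_nonneg _) two_ne_zero).mp
    ((hc z hz).trans (hc z₀ hz₀).symm).le

lemma exists_ae_eq_smul_norm_iff {h G : ℂ → ℂ} {U : Set ℂ} (hU : IsPreconnected U)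
    (hUo : IsOpen U) (hh : ContinuousOn h U) (hne : ∀ z ∈ U, h z ≠ 0)
    (hG : DifferentiableOn ℂ G U) :
    (∃ c : ℝ, (fun z ↦ ‖G z‖ ^ 2 * ‖h z‖) =ᵐ[volume.restrict U] c • (‖h ·‖)) ↔
      ∃ k, ∀ z ∈ U, G z = k := by
  constructor
  · rintro ⟨c, hc⟩
    have heqOn := Measure.eqOn_open_of_ae_eq hc hUo ((hG.continuousOn.norm.pow 2).mul hh.norm)
      (hh.norm.const_smul c)
    exact exists_eqOn_const_of_norm_sq_eq hU hUo hG fun z hz ↦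
      mul_right_cancel₀ (norm_ne_zero_iff.mpr (hne z hz)) (heqOn hz)
  · rintro ⟨k, hk⟩
    refine ⟨‖k‖ ^ 2, ae_restrict_of_forall_mem hUo.measurableSet fun z hz ↦ ?_⟩
    simp [hk z hz]

lemma memLp_two_restrict_ball {g : ℂ → ℝ} {R : ℝ} (hg : ContinuousOn g (closedBall 0 R)) :
    MemLp g 2 (volume.restrict (ball 0 R)) := by
  rw [memLp_two_iff_integrable_sq
    ((hg.mono ball_subset_closedBall).aestronglyMeasurable measurableSet_ball)]
  exact ((hg.pow 2).integrableOn_compact (isCompact_closedBall _ _)).mono_set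
    ball_subset_closedBall

lemma setIntegral_norm_sq_pos {h : ℂ → ℂ} {R : ℝ} (hR : 0 < R)
    (hh : ContinuousOn h (closedBall 0 R)) (hne : ∀ z ∈ ball 0 R, h z ≠ 0) :
    0 < ∫ z in ball 0 R, ‖h z‖ ^ 2 := by
  rw [setIntegral_pos_iff_support_of_nonneg_ae (.of_forall fun z ↦ by positivity)
    (memLp_two_restrict_ball hh.norm).integrable_sq]
  refine (measure_ball_pos volume 0 hR).trans_le (measure_mono fun z hz ↦ ⟨?_, hz⟩)
  simpa using hne z hz

end CauchySchwarz

section Embedding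

open Metric

lemma intervalIntegral_exp_eq_circleAverage {E : Type*} [NormedAddCommGroup E] [NormedSpace ℝ E]
    (g : ℂ → E) :
    ∫ φ in 0..2 * π, g (Complex.exp (φ * Complex.I)) = (2 * π) • circleAverage g 0 1 := by
  simp only [circleAverage, circleMap_zero, Complex.ofReal_one, one_mul,
    smul_inv_smul₀ two_pi_pos.ne']

lemma eq_half_mul_sqrt_mul_iff {A I X M : ℝ} (hA : 0 < A) (hI : 0 ≤ I) (hM : 0 ≤ M)
    (hIX : I ^ 2 ≤ A * X) (hXM : X ≤ π * M ^ 2) :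
    I = 1 / 2 * √(A / π) * (2 * π * M) ↔ I ^ 2 = A * X ∧ X = π * M ^ 2 := by
  have hsq : (1 / 2 * √(A / π) * (2 * π * M)) ^ 2 = A * (π * M ^ 2) := by
    rw [mul_pow, mul_pow, sq_sqrt (by positivity)]
    field_simp
  rw [← sq_eq_sq₀ hI (by positivity), hsq]
  constructor
  · intro heq
    have hX : X = π * M ^ 2 := hXM.antisymm (le_of_mul_le_mul_left (heq ▸ hIX) hA)
    exact ⟨by rw [heq, hX], hX⟩
  · rintro ⟨hIA, rfl⟩
    exact hIA

variable {f h G : ℂ → ℂ}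

lemma eq_div_one_sub_mul_iff_of_sq_eq (hf : DifferentiableOn ℂ f (ball 0 1)) (hf₀ : f 0 ≠ 0)
    (hsq : ∀ z, f z ^ 2 = h z) :
    (∃ q, ‖q‖ < 1 ∧ ∀ z ∈ ball 0 1, f z = f 0 / (1 - q * z)) ↔
      ∃ κ ≠ 0, ∃ q, ‖q‖ < 1 ∧ ∀ z ∈ ball 0 1, h z = κ / (1 - q * z) ^ 2 := by
  constructor
  · rintro ⟨q, hq, hfq⟩
    exact ⟨f 0 ^ 2, pow_ne_zero 2 hf₀, q, hq, fun z hz ↦ by rw [← hsq, hfq z hz, div_pow]⟩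
  · rintro ⟨κ, -, q, hq, hhq⟩
    have hne (z : ℂ) (hz : z ∈ ball 0 1) : 1 - q * z ≠ 0 :=
      one_sub_mul_ne_zero hq (mem_ball_zero_iff.mp hz)
    obtain ⟨m, hm⟩ := exists_eqOn_const_of_norm_sq_eq (G := fun z ↦ f z * (1 - q * z))
      (convex_ball 0 1).isPreconnected isOpen_ball (hf.mul (by fun_prop)) (c := ‖κ‖) fun z hz ↦ by
        rw [← norm_pow, mul_pow, hsq, hhq z hz, div_mul_cancel₀ _ (pow_ne_zero 2 (hne z hz))]
    have hm₀ : f 0 = m := by simpa using hm 0 (mem_ball_self one_pos)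
    exact ⟨q, hq, fun z hz ↦ by rw [eq_div_iff (hne z hz), hm z hz, hm₀]⟩

lemma integral_ball_sq_le_of_weight (hh : DifferentiableOn ℂ h (ball 0 1))
    (hhc : ContinuousOn h (closedBall 0 1)) (hne : ∀ z ∈ ball 0 1, h z ≠ 0)
    (hG : DifferentiableOn ℂ G (ball 0 1)) (hGc : ContinuousOn G (closedBall 0 1)) :
    ∫ z in ball 0 1, (‖G z‖ ^ 2 * ‖h z‖) ^ 2 ≤
      π * circleAverage (fun z ↦ ‖G z‖ ^ 2 * ‖h z‖) 0 1 ^ 2 := by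
  obtain ⟨f, hf, hsq⟩ :=
    exists_differentiableOn_sq_eq (isSimplyConnected_ball 0 one_pos) isOpen_ball hh hne
  refine carleman_inequality (hG.mul hf) ((hGc.norm.pow 2).mul hhc.norm) fun z _ ↦ ?_
  simp only [Pi.mul_apply, norm_mul, mul_pow, ← hsq, norm_pow]

lemma integral_ball_sq_eq_iff_of_weight_const (hh : DifferentiableOn ℂ h (ball 0 1))
    (hhc : ContinuousOn h (closedBall 0 1)) (hne : ∀ z ∈ ball 0 1, h z ≠ 0)
    (hGc : ContinuousOn G (closedBall 0 1)) {k : ℂ} (hk : k ≠ 0)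
    (hGk : ∀ z ∈ ball 0 1, G z = k) :
    ∫ z in ball 0 1, (‖G z‖ ^ 2 * ‖h z‖) ^ 2 =
        π * circleAverage (fun z ↦ ‖G z‖ ^ 2 * ‖h z‖) 0 1 ^ 2 ↔
      ∃ κ ≠ 0, ∃ q, ‖q‖ < 1 ∧ ∀ z ∈ ball 0 1, h z = κ / (1 - q * z) ^ 2 := by
  obtain ⟨f, hf, hsq⟩ :=
    exists_differentiableOn_sq_eq (isSimplyConnected_ball 0 one_pos) isOpen_ball hh hne
  have hf₀ : f 0 ≠ 0 :=
    pow_ne_zero_iff two_ne_zero |>.mp (hsq 0 ▸ hne 0 (mem_ball_self one_pos))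
  have hKc : ContinuousOn (fun z ↦ ‖G z‖ ^ 2 * ‖h z‖) (closedBall 0 1) :=
    (hGc.norm.pow 2).mul hhc.norm
  have hKf : EqOn (fun z ↦ ‖G z‖ ^ 2 * ‖h z‖) (‖k * f ·‖ ^ 2) (ball 0 1) := fun z hz ↦ by
    simp only [hGk z hz, norm_mul, mul_pow, ← hsq, norm_pow]
  rw [carleman_equality_iff (hf.const_mul k) hKc hKf (mul_ne_zero hk hf₀),
    ← eq_div_one_sub_mul_iff_of_sq_eq hf hf₀ hsq]
  simp only [mul_div_assoc, mul_right_inj' hk]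

theorem embedding_equality_iff (hh : DifferentiableOn ℂ h (ball 0 1))
    (hhc : ContinuousOn h (closedBall 0 1)) (hne : ∀ z ∈ ball 0 1, h z ≠ 0)
    (hG : DifferentiableOn ℂ G (ball 0 1)) (hGc : ContinuousOn G (closedBall 0 1))
    (hG₀ : ∃ z ∈ ball 0 1, G z ≠ 0) :
    (∫ z in ball 0 1, ‖G z‖ ^ 2 * ‖h z‖ ^ 2 =
        1 / 2 * √((∫ z in ball 0 1, ‖h z‖ ^ 2) / π) *
          ∫ φ in 0..2 * π,
            ‖G (Complex.exp (φ * Complex.I))‖ ^ 2 * ‖h (Complex.exp (φ * Complex.I))‖) ↔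
      (∃ k, ∀ z ∈ ball 0 1, G z = k) ∧
        ∃ κ ≠ 0, ∃ q, ‖q‖ < 1 ∧ ∀ z ∈ ball 0 1, h z = κ / (1 - q * z) ^ 2 := by
  set K : ℂ → ℝ := fun z ↦ ‖G z‖ ^ 2 * ‖h z‖ with hK
  have hKnonneg (z : ℂ) : 0 ≤ K z := by positivity
  have hKL2 : MemLp K 2 (volume.restrict (ball 0 1)) :=
    memLp_two_restrict_ball ((hGc.norm.pow 2).mul hhc.norm)
  have hhL2 := memLp_two_restrict_ball hhc.norm
  have hmass := setIntegral_norm_sq_pos one_pos hhc hne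
  have hcross (z : ℂ) : ‖G z‖ ^ 2 * ‖h z‖ ^ 2 = ‖h z‖ * K z := by
    rw [hK]
    ring
  have hconst := (sq_integral_mul_eq_iff hhL2 hKL2 hmass).trans <| exists_ae_eq_smul_norm_iff
    (convex_ball 0 1).isPreconnected isOpen_ball (hhc.mono ball_subset_closedBall) hne hG
  simp only [hcross]
  rw [intervalIntegral_exp_eq_circleAverage K, smul_eq_mul,
    eq_half_mul_sqrt_mul_iff hmass (integral_nonneg fun z ↦ by positivity)
      (circleAverage_nonneg_of_nonneg fun z _ ↦ hKnonneg z) (sq_integral_mul_le hhL2 hKL2)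
      (integral_ball_sq_le_of_weight hh hhc hne hG hGc), hconst]
  refine and_congr_right fun ⟨k, hGk⟩ ↦ ?_
  obtain ⟨z, hz, hGz⟩ := hG₀
  exact integral_ball_sq_eq_iff_of_weight_const hh hhc hne hGc (hGk z hz ▸ hGz) hGk

end Embedding

section Conformal

open Metric

/-- On the unit circle `F'` and `G` stand for the boundary values of the derivative of `F` and of
`u ∘ F`. -/
theorem stmt_4_general {F F' u G : ℂ → ℂ} (hF : ∀ z ∈ ball 0 1, HasDerivAt F (F' z) z)
    (hF' : ContinuousOn F' (closedBall 0 1)) (hinj : InjOn F (ball 0 1))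
    (hu : DifferentiableOn ℂ u (F '' ball 0 1)) (hG : ContinuousOn G (closedBall 0 1))
    (hGu : EqOn G (u ∘ F) (ball 0 1)) (hu₀ : ∃ z ∈ F '' ball 0 1, u z ≠ 0) :
    (∫ z in ball 0 1, ‖u (F z)‖ ^ 2 * ‖F' z‖ ^ 2 =
        1 / 2 * √((∫ z in ball 0 1, ‖F' z‖ ^ 2) / π) *
          ∫ φ in 0..2 * π,
            ‖G (Complex.exp (φ * Complex.I))‖ ^ 2 * ‖F' (Complex.exp (φ * Complex.I))‖) ↔
      (∃ k, ∀ z ∈ F '' ball 0 1, u z = k) ∧ ∃ c r, 0 < r ∧ F '' ball 0 1 = ball c r := by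
  have hFd : DifferentiableOn ℂ F (ball 0 1) := fun z hz ↦
    (hF z hz).differentiableAt.differentiableWithinAt
  have hderiv : EqOn F' (deriv F) (ball 0 1) := fun z hz ↦ (hF z hz).deriv.symm
  have hF'd : DifferentiableOn ℂ F' (ball 0 1) := (hFd.deriv isOpen_ball).congr hderiv
  have hF'₀ (z : ℂ) (hz : z ∈ ball 0 1) : F' z ≠ 0 := hderiv hz ▸
    deriv_ne_zero_of_injOn (hFd.analyticAt (isOpen_ball.mem_nhds hz))
      (isOpen_ball.mem_nhds hz) hinj
  have hGd : DifferentiableOn ℂ G (ball 0 1) := (hu.comp hFd (mapsTo_image _ _)).congr hGu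
  have harea : ∫ z in ball 0 1, ‖u (F z)‖ ^ 2 * ‖F' z‖ ^ 2 =
      ∫ z in ball 0 1, ‖G z‖ ^ 2 * ‖F' z‖ ^ 2 :=
    setIntegral_congr_fun measurableSet_ball fun z hz ↦ by simp only [hGu hz, Function.comp_apply]
  have hG₀ : ∃ z ∈ ball 0 1, G z ≠ 0 := by
    obtain ⟨_, ⟨z, hz, rfl⟩, huz⟩ := hu₀
    exact ⟨z, hz, hGu hz ▸ huz⟩
  have hconst : (∃ k, ∀ z ∈ F '' ball 0 1, u z = k) ↔ ∃ k, ∀ z ∈ ball 0 1, G z = k := by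
    simp only [forall_mem_image]
    exact exists_congr fun k ↦ forall₂_congr fun z hz ↦ by rw [hGu hz, Function.comp_apply]
  rw [harea, embedding_equality_iff hF'd hF' hF'₀ hGd hG hG₀, hconst,
    exists_image_eq_ball_iff_deriv_eq hF hinj]

end Conformal

/-- Equality case of Proposition 2.7 of the paper, stated via a conformal parametrization `F`
of `Ω` by the unit disk: equality holds if and only if `u` is constant on `Ω` and `Ω` is a
disk. -/
theorem stmt_4 (F : ℂ → ℂ) (U : Set ℂ) (hU : IsOpen U)
    (hUD : Metric.closedBall (0 : ℂ) 1 ⊆ U)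
    (hF : DifferentiableOn ℂ F U)
    (hFinj : Set.InjOn F (Metric.closedBall (0 : ℂ) 1))
    (Ω : Set ℂ) (hΩ : Ω = F '' (Metric.ball (0 : ℂ) 1))
    (u : ℂ → ℂ)
    (hu : DifferentiableOn ℂ u Ω)
    (hucont : ContinuousOn u (F '' (Metric.closedBall (0 : ℂ) 1)))
    (hune0 : ∃ z ∈ Ω, u z ≠ 0) :
    (∫ z in Metric.ball (0 : ℂ) 1, ‖u (F z)‖^2 * ‖deriv F z‖^2
      = (1/2) * Real.sqrt ((∫ z in Metric.ball (0 : ℂ) 1, ‖deriv F z‖^2) / π) *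
        ∫ φ in (0:ℝ)..(2*π),
          ‖u (F (Complex.exp (φ * Complex.I)))‖^2 * ‖deriv F (Complex.exp (φ * Complex.I))‖)
    ↔ ((∃ k : ℂ, ∀ z ∈ Ω, u z = k) ∧ ∃ (c : ℂ) (r : ℝ), 0 < r ∧ Ω = Metric.ball c r) := by
  subst hΩ
  have hFD : ContinuousOn F (Metric.closedBall 0 1) := hF.continuousOn.mono hUD
  exact stmt_4_general
    (fun z hz ↦ hF.hasDerivAt (hU.mem_nhds (hUD (Metric.ball_subset_closedBall hz))))
    ((hF.deriv hU).continuousOn.mono hUD) (hFinj.mono Metric.ball_subset_closedBall) hu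
    (hucont.comp hFD (mapsTo_image F _)) (eqOn_refl _ _) hune0
end

section
/- Let m ≥ 0 and Λ > 0, let μ : (0, ∞) → ℝ be continuous and strictly increasing with range exactly (0, Λ), and suppose the function a ↦ μ(a)/a is strictly decreasing on (0, ∞). Let ϑ(θ) = (1 − sin θ)/cos θ for θ ∈ (−π/2, π/2), and let f : (0, ∞) → (−π/2, π/2) be a function satisfying ϑ(f(a)) = a/(√(μ(a) + m²) + m) for all a > 0. Then f is continuous, strictly decreasing, and bijective from (0, ∞) onto (−π/2, π/2). -/
open Real Set

/-!
With `p a = μ a / a ^ 2`, the hypothesis on `f` reads `ϑ (f a) = (h a)⁻¹`, where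
`h a = √(p a + (m / a) ^ 2) + m / a`. Since `p` is the product of the antitone function `μ a / a`
and the strictly antitone function `1 / a`, it decreases strictly from `∞` to `0` on `(0, ∞)`, and
each summand of `h` inherits the monotonicity and the limits. As `ϑ θ = tan (π / 4 - θ / 2)`,
solving for `f` gives `f a = 2 * arctan (h a) - π / 2`, and `arctan` maps `(0, ∞)` increasingly
onto `(0, π / 2)`.
-/

open Filter Topology

section DivSelf

variable {𝕜 : Type*} [Field 𝕜] [LinearOrder 𝕜] [IsStrictOrderedRing 𝕜] {q : 𝕜 → 𝕜}

theorem strictAntiOn_div_self_of_antitoneOn (hq : AntitoneOn q (Ioi 0))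
    (hpos : ∀ a ∈ Ioi 0, 0 < q a) : StrictAntiOn (fun a => q a / a) (Ioi 0) := by
  intro a ha b hb hab
  calc q b / b < q b / a := div_lt_div_of_pos_left (hpos b hb) ha hab
    _ ≤ q a / a := div_le_div_of_nonneg_right (hq ha hb hab.le) (le_of_lt ha)

variable [TopologicalSpace 𝕜] [OrderTopology 𝕜]

theorem tendsto_div_self_nhdsGT_zero_of_antitoneOn (hq : AntitoneOn q (Ioi 0)) {c : 𝕜}
    (hc : 0 < c) (hqc : 0 < q c) : Tendsto (fun a => q a / a) (𝓝[>] 0) atTop := by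
  refine tendsto_atTop_mono' _ ?_ (tendsto_inv_nhdsGT_zero.const_mul_atTop hqc)
  filter_upwards [Ioc_mem_nhdsGT hc] with a ⟨ha, hac⟩
  calc q c * a⁻¹ ≤ q a * a⁻¹ := mul_le_mul_of_nonneg_right (hq ha hc hac) (inv_pos.2 ha).le
    _ = q a / a := (div_eq_mul_inv _ _).symm

theorem tendsto_div_self_atTop_of_antitoneOn (hq : AntitoneOn q (Ioi 0))
    (hnonneg : ∀ a ∈ Ioi 0, 0 ≤ q a) : Tendsto (fun a => q a / a) atTop (𝓝 0) := by
  refine tendsto_of_tendsto_of_tendsto_of_le_of_le' tendsto_const_nhds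
    ((tendsto_const_nhds (x := q 1)).div_atTop tendsto_id) ?_ ?_
  · filter_upwards [Ioi_mem_atTop 0] with a ha using div_nonneg (hnonneg a ha) (le_of_lt ha)
  · filter_upwards [Ici_mem_atTop 1] with a ha
    have ha₀ : 0 < a := one_pos.trans_le ha
    exact div_le_div_of_nonneg_right (hq one_pos ha₀ ha) ha₀.le

end DivSelf

section Vartheta

/-- Unconditional, as both sides take the junk value `0` where `cos θ = 0`. -/
theorem vartheta_eq_tan (θ : ℝ) : vartheta θ = tan (π / 4 - θ / 2) := by
  obtain ⟨φ, rfl⟩ : ∃ φ, θ = π / 2 - 2 * φ := ⟨π / 4 - θ / 2, by ring⟩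
  have hφ : π / 4 - (π / 2 - 2 * φ) / 2 = φ := by ring
  have hnum : 1 - cos (2 * φ) = 2 * sin φ * sin φ := by
    rw [cos_two_mul, cos_sq']
    ring
  rw [hφ, vartheta, sin_pi_div_two_sub, cos_pi_div_two_sub, sin_two_mul, hnum, tan_eq_sin_div_cos]
  rcases eq_or_ne (sin φ) 0 with hs | hs
  · simp [hs]
  · exact mul_div_mul_left _ _ (mul_ne_zero two_ne_zero hs)

theorem eq_two_mul_arctan_sub_of_vartheta_eq_inv {θ t : ℝ} (hθ : θ ∈ Ioo (-(π / 2)) (π / 2))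
    (ht : 0 < t) (h : vartheta θ = t⁻¹) : θ = 2 * arctan t - π / 2 := by
  obtain ⟨hθ₁, hθ₂⟩ := hθ
  have harctan : π / 4 - θ / 2 = π / 2 - arctan t := by
    rw [← arctan_inv_of_pos ht, ← h, vartheta_eq_tan, arctan_tan] <;> linarith
  linarith

theorem bijOn_two_mul_arctan_sub :
    BijOn (fun t => 2 * arctan t - π / 2) (Ioi 0) (Ioo (-(π / 2)) (π / 2)) := by
  refine ⟨fun t ht => ?_, fun s _ t _ hst => ?_, fun θ ⟨hθ₁, hθ₂⟩ => ?_⟩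
  · have hlower : 0 < arctan t := arctan_pos.2 ht
    have hupper := arctan_lt_pi_div_two t
    constructor <;> linarith
  · exact arctan_injective (by simpa using hst)
  · refine ⟨tan (π / 4 + θ / 2), tan_pos_of_pos_of_lt_pi_div_two ?_ ?_, ?_⟩
    · linarith
    · linarith
    · beta_reduce
      rw [arctan_tan] <;> linarith

end Vartheta

section InverseBoundaryParam

/-- The reciprocal of the boundary parameter `a / (√(μ a + m ^ 2) + m)`, written in terms of
`p a = μ a / a ^ 2` so that its dependence on `a` is visibly monotone. -/
noncomputable def inverseBoundaryParam (m : ℝ) (p : ℝ → ℝ) (a : ℝ) : ℝ :=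
  √(p a + (m / a) ^ 2) + m / a

variable {m : ℝ} {p : ℝ → ℝ}

theorem inv_inverseBoundaryParam (m : ℝ) (μ : ℝ → ℝ) {a : ℝ} (ha : 0 < a) :
    (inverseBoundaryParam m (fun a => μ a / a / a) a)⁻¹ = a / (√(μ a + m ^ 2) + m) := by
  have hrad : μ a / a / a + (m / a) ^ 2 = (μ a + m ^ 2) / a ^ 2 := by ring
  rw [inverseBoundaryParam, hrad, sqrt_div' _ (sq_nonneg a), sqrt_sq ha.le, ← add_div, inv_div]

theorem inverseBoundaryParam_pos (hm : 0 ≤ m) {a : ℝ} (ha : 0 < a) (hp : 0 < p a) :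
    0 < inverseBoundaryParam m p a := by
  unfold inverseBoundaryParam
  positivity

theorem continuousOn_inverseBoundaryParam (m : ℝ) (hp : ContinuousOn p (Ioi 0)) :
    ContinuousOn (inverseBoundaryParam m p) (Ioi 0) := by
  have hdiv : ContinuousOn (fun a => m / a) (Ioi 0) :=
    continuousOn_const.div continuousOn_id fun a ha => ne_of_gt ha
  exact (hp.add (hdiv.pow 2)).sqrt.add hdiv

theorem strictAntiOn_inverseBoundaryParam (hm : 0 ≤ m) (hp : StrictAntiOn p (Ioi 0))
    (hnonneg : ∀ a ∈ Ioi 0, 0 ≤ p a) : StrictAntiOn (inverseBoundaryParam m p) (Ioi 0) := by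
  intro a ha b hb hab
  have hdiv : m / b ≤ m / a := div_le_div_of_nonneg_left hm ha hab.le
  have hsq : (m / b) ^ 2 ≤ (m / a) ^ 2 := pow_le_pow_left₀ (div_nonneg hm (le_of_lt hb)) hdiv 2
  have hrad : p b + (m / b) ^ 2 < p a + (m / a) ^ 2 := add_lt_add_of_lt_of_le (hp ha hb hab) hsq
  exact add_lt_add_of_lt_of_le
    (sqrt_lt_sqrt (add_nonneg (hnonneg b hb) (sq_nonneg _)) hrad) hdiv

theorem tendsto_inverseBoundaryParam_nhdsGT_zero (hm : 0 ≤ m) (hp : Tendsto p (𝓝[>] 0) atTop) :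
    Tendsto (inverseBoundaryParam m p) (𝓝[>] 0) atTop := by
  refine tendsto_atTop_mono' _ ?_ (tendsto_sqrt_atTop.comp hp)
  filter_upwards [self_mem_nhdsWithin] with a ha
  calc √(p a) ≤ √(p a + (m / a) ^ 2) := sqrt_le_sqrt (le_add_of_nonneg_right (sq_nonneg _))
    _ ≤ inverseBoundaryParam m p a := le_add_of_nonneg_right (div_nonneg hm (le_of_lt ha))

theorem tendsto_inverseBoundaryParam_atTop (m : ℝ) (hp : Tendsto p atTop (𝓝 0)) :
    Tendsto (inverseBoundaryParam m p) atTop (𝓝 0) := by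
  have hdiv : Tendsto (fun a => m / a) atTop (𝓝 0) := tendsto_const_nhds.div_atTop tendsto_id
  have hsum := (hp.add (hdiv.pow 2)).sqrt.add hdiv
  simp only [ne_eq, OfNat.ofNat_ne_zero, not_false_eq_true, zero_pow, add_zero, sqrt_zero] at hsum
  exact hsum

theorem bijOn_inverseBoundaryParam (hm : 0 ≤ m) (hcont : ContinuousOn p (Ioi 0))
    (hanti : StrictAntiOn p (Ioi 0)) (hpos : ∀ a ∈ Ioi 0, 0 < p a)
    (hzero : Tendsto p (𝓝[>] 0) atTop) (htop : Tendsto p atTop (𝓝 0)) :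
    BijOn (inverseBoundaryParam m p) (Ioi 0) (Ioi 0) :=
  ⟨fun a ha => inverseBoundaryParam_pos hm ha (hpos a ha),
    (strictAntiOn_inverseBoundaryParam hm hanti fun a ha => (hpos a ha).le).injOn,
    isPreconnected_Ioi.intermediate_value_Ioi (le_principal_iff.2 (Ioi_mem_atTop 0))
      (le_principal_iff.2 self_mem_nhdsWithin) (continuousOn_inverseBoundaryParam m hcont)
      (tendsto_inverseBoundaryParam_atTop m htop)
      (tendsto_inverseBoundaryParam_nhdsGT_zero hm hzero)⟩

end InverseBoundaryParam

theorem stmt_7_general {m : ℝ} (hm : 0 ≤ m) {μ : ℝ → ℝ} (hμcont : ContinuousOn μ (Ioi 0))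
    (hμpos : ∀ a ∈ Ioi 0, 0 < μ a) (hquot : AntitoneOn (fun a => μ a / a) (Ioi 0)) {f : ℝ → ℝ}
    (hfmaps : ∀ a ∈ Ioi 0, f a ∈ Ioo (-(π / 2)) (π / 2))
    (hf : ∀ a ∈ Ioi 0, vartheta (f a) = a / (√(μ a + m ^ 2) + m)) :
    ContinuousOn f (Ioi 0) ∧ StrictAntiOn f (Ioi 0) ∧
      BijOn f (Ioi 0) (Ioo (-(π / 2)) (π / 2)) := by
  set p : ℝ → ℝ := fun a => μ a / a / a
  set h : ℝ → ℝ := inverseBoundaryParam m p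
  have hqpos : ∀ a ∈ Ioi 0, 0 < μ a / a := fun a ha => div_pos (hμpos a ha) ha
  have hppos : ∀ a ∈ Ioi 0, 0 < p a := fun a ha => div_pos (hqpos a ha) ha
  have hne : ∀ a ∈ Ioi (0 : ℝ), a ≠ 0 := fun a ha => ne_of_gt ha
  have hpcont : ContinuousOn p (Ioi 0) :=
    (hμcont.div continuousOn_id hne).div continuousOn_id hne
  have hpanti : StrictAntiOn p (Ioi 0) := strictAntiOn_div_self_of_antitoneOn hquot hqpos
  have hbij : BijOn h (Ioi 0) (Ioi 0) := bijOn_inverseBoundaryParam hm hpcont hpanti hppos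
    (tendsto_div_self_nhdsGT_zero_of_antitoneOn hquot one_pos (hqpos 1 (mem_Ioi.2 one_pos)))
    (tendsto_div_self_atTop_of_antitoneOn hquot fun a ha => (hqpos a ha).le)
  have hfh : EqOn (fun a => 2 * arctan (h a) - π / 2) f (Ioi 0) := fun a ha =>
    (eq_two_mul_arctan_sub_of_vartheta_eq_inv (hfmaps a ha) (hbij.mapsTo ha)
      ((hf a ha).trans (inv_inverseBoundaryParam m μ ha).symm)).symm
  refine ⟨ContinuousOn.congr ?_ hfh.symm, StrictAntiOn.congr ?_ hfh,
    (bijOn_two_mul_arctan_sub.comp hbij).congr hfh⟩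
  · have hhcont : ContinuousOn h (Ioi 0) := continuousOn_inverseBoundaryParam m hpcont
    exact ((continuous_arctan.comp_continuousOn hhcont).const_mul 2).sub continuousOn_const
  · intro a ha b hb hab
    have hlt : h b < h a :=
      strictAntiOn_inverseBoundaryParam hm hpanti (fun a ha => (hppos a ha).le) ha hb hab
    linarith [arctan_strictMono hlt]

/-- Abstract form of Lemma 3.4: the function `f` with
`ϑ(f(a)) = a/(√(μ(a)+m²)+m)` is continuous, strictly decreasing, and bijective from
`(0,∞)` onto `(−π/2, π/2)`. -/
theorem stmt_7 (m Λ : ℝ) (hm : 0 ≤ m) (hΛ : 0 < Λ)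
    (μ : ℝ → ℝ)
    (hμcont : ContinuousOn μ (Ioi 0))
    (hμmono : StrictMonoOn μ (Ioi 0))
    (hμrange : μ '' (Ioi 0) = Ioo 0 Λ)
    (hquot : StrictAntiOn (fun a => μ a / a) (Ioi 0))
    (f : ℝ → ℝ)
    (hfmaps : ∀ a ∈ Ioi (0:ℝ), f a ∈ Ioo (-(π/2)) (π/2))
    (hf : ∀ a ∈ Ioi (0:ℝ), vartheta (f a) = a / (Real.sqrt (μ a + m^2) + m)) :
    ContinuousOn f (Ioi 0) ∧ StrictAntiOn f (Ioi 0) ∧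
      Set.BijOn f (Ioi 0) (Ioo (-(π/2)) (π/2)) :=
  stmt_7_general hm hμcont (fun _ ha => (hμrange.subset (mem_image_of_mem μ ha)).1)
    hquot.antitoneOn hfmaps hf
end
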